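/- arXiv:1807.08324 — 2 statements merged into one kernel-verified Lean document; each statement's English description precedes it below -/
import Mathlib

section
/- Let (g, [·,·], α) be a multiplicative Hom-Lie algebra over a field K with α surjective, and let I be an ideal of g. Then for every r ≥ 0 the term D^r(I) of the derived series of I (D^0(I) = I, D^{r+1}(I) = [D^r(I), D^r(I)]) is an ideal of g; that is, [g, D^r(I)] ⊆ D^r(I) and α(D^r(I)) ⊆ D^r(I). -/
/-- The span of brackets of elements of `A` with elements of `C`. -/
def homLieBracketSpan {K g : Type*} [Field K] [AddCommGroup g] [Module K g]
    (B : g →ₗ[K] g →ₗ[K] g) (A C : Submodule K g) : Submodule K g :=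
  Submodule.span K {z | ∃ a ∈ A, ∃ c ∈ C, z = B a c}

/-- The derived series of an ideal `I` : `D^0(I) = I`, `D^{r+1}(I) = [D^r(I), D^r(I)]`. -/
def homLieDerivedSeries {K g : Type*} [Field K] [AddCommGroup g] [Module K g]
    (B : g →ₗ[K] g →ₗ[K] g) (I : Submodule K g) : ℕ → Submodule K g
  | 0 => I
  | r + 1 => homLieBracketSpan B (homLieDerivedSeries B I r) (homLieDerivedSeries B I r)

/-!
For skew brackets the Hom-Jacobi identity is a twisted Leibniz rule: bracketing with `α x` sends
`[a, c]` to `[[x, a], α c] + [α a, [x, c]]`. When `a` and `c` lie in ideals `I` and `J`, both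
summands lie in `[I, J]`. Since `α` is surjective, every element of the algebra has the form `α x`,
so `[I, J]` is again an ideal.
-/

section HomLeibniz

variable {R M : Type*} [CommSemiring R] [AddCommMonoid M] [Module R M]
  {B : M →ₗ[R] M →ₗ[R] M} {α : M →ₗ[R] M} {I J : Submodule R M}

/-- A left Hom-ideal: a submodule stable under left brackets and under the twisting map `α`.
If `B` is skew-symmetric, this is an ideal of the Hom-algebra `(M, B, α)`; for other brackets
nothing is asked of the products `B a x` with `a ∈ I`. -/
structure IsLeftHomIdeal (B : M →ₗ[R] M →ₗ[R] M) (α : M →ₗ[R] M) (I : Submodule R M) : Prop where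
  bracket_mem : ∀ x, ∀ a ∈ I, B x a ∈ I
  map_mem : ∀ a ∈ I, α a ∈ I

theorem map_mem_map₂_of_multiplicative (hmul : ∀ x y, α (B x y) = B (α x) (α y))
    (hI : ∀ a ∈ I, α a ∈ I) (hJ : ∀ c ∈ J, α c ∈ J) :
    ∀ y ∈ Submodule.map₂ B I J, α y ∈ Submodule.map₂ B I J := by
  suffices h : Submodule.map₂ B I J ≤ (Submodule.map₂ B I J).comap α from fun _ hy => h hy
  refine Submodule.map₂_le.mpr fun a ha c hc => ?_
  rw [Submodule.mem_comap, hmul]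
  exact Submodule.apply_mem_map₂ B (hI a ha) (hJ c hc)

theorem IsLeftHomIdeal.bracket_map_mem_map₂
    (hleib : ∀ x y z, B (α x) (B y z) = B (B x y) (α z) + B (α y) (B x z))
    (hI : IsLeftHomIdeal B α I) (hJ : IsLeftHomIdeal B α J) (x : M) :
    ∀ y ∈ Submodule.map₂ B I J, B (α x) y ∈ Submodule.map₂ B I J := by
  suffices h : Submodule.map₂ B I J ≤ (Submodule.map₂ B I J).comap (B (α x)) from
    fun _ hy => h hy
  refine Submodule.map₂_le.mpr fun a ha c hc => ?_
  rw [Submodule.mem_comap, hleib]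
  exact add_mem
    (Submodule.apply_mem_map₂ B (hI.bracket_mem x a ha) (hJ.map_mem c hc))
    (Submodule.apply_mem_map₂ B (hI.map_mem a ha) (hJ.bracket_mem x c hc))

theorem IsLeftHomIdeal.map₂
    (hleib : ∀ x y z, B (α x) (B y z) = B (B x y) (α z) + B (α y) (B x z))
    (hmul : ∀ x y, α (B x y) = B (α x) (α y)) (hsurj : Function.Surjective α)
    (hI : IsLeftHomIdeal B α I) (hJ : IsLeftHomIdeal B α J) :
    IsLeftHomIdeal B α (Submodule.map₂ B I J) where
  bracket_mem := hsurj.forall.mpr (hI.bracket_map_mem_map₂ hleib hJ)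
  map_mem := map_mem_map₂_of_multiplicative hmul hI.map_mem hJ.map_mem

theorem derivedSeries_is_ideal_general
    (hleib : ∀ x y z, B (α x) (B y z) = B (B x y) (α z) + B (α y) (B x z))
    (hmul : ∀ x y, α (B x y) = B (α x) (α y)) (hsurj : Function.Surjective α)
    (hI : IsLeftHomIdeal B α I) (r : ℕ) :
    IsLeftHomIdeal B α ((fun J => Submodule.map₂ B J J)^[r] I) :=
  Function.Iterate.rec (IsLeftHomIdeal B α) hI (fun _ hJ => hJ.map₂ hleib hmul hsurj hJ) r

end HomLeibniz

theorem homLeibniz_of_homJacobi {R M : Type*} [CommRing R] [AddCommGroup M] [Module R M]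
    {B : M →ₗ[R] M →ₗ[R] M} {α : M →ₗ[R] M} (hskew : ∀ x y, B x y = -B y x)
    (hjac : ∀ x y z, B (α x) (B y z) + B (α y) (B z x) + B (α z) (B x y) = 0) (x y z : M) :
    B (α x) (B y z) = B (B x y) (α z) + B (α y) (B x z) := by
  rw [hskew (B x y), hskew x z, map_neg, ← sub_eq_zero, ← hjac x y z]
  abel

section DerivedSeries

variable {K g : Type*} [Field K] [AddCommGroup g] [Module K g] (B : g →ₗ[K] g →ₗ[K] g)

theorem homLieBracketSpan_eq_map₂ (A C : Submodule K g) :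
    homLieBracketSpan B A C = Submodule.map₂ B A C := by
  simp only [homLieBracketSpan, Submodule.map₂_eq_span_image2, Set.image2, SetLike.mem_coe,
    eq_comm]

theorem homLieDerivedSeries_eq_iterate (I : Submodule K g) (r : ℕ) :
    homLieDerivedSeries B I r = (fun J => Submodule.map₂ B J J)^[r] I := by
  induction r with
  | zero => rfl
  | succ r ih =>
    rw [homLieDerivedSeries, homLieBracketSpan_eq_map₂, ih, Function.iterate_succ_apply']

end DerivedSeries

/-- In a multiplicative Hom-Lie algebra with surjective structure map, each
term of the derived series of an ideal is an ideal. -/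
theorem derivedSeries_is_ideal {K g : Type*} [Field K] [AddCommGroup g] [Module K g]
    (B : g →ₗ[K] g →ₗ[K] g) (α : g →ₗ[K] g)
    (hskew : ∀ x y, B x y = - B y x)
    (hjac : ∀ x y z, B (α x) (B y z) + B (α y) (B z x) + B (α z) (B x y) = 0)
    (hmul : ∀ x y, α (B x y) = B (α x) (α y))
    (hsurj : Function.Surjective α)
    (I : Submodule K g)
    (hI1 : ∀ x : g, ∀ a ∈ I, B x a ∈ I) (hI2 : ∀ a ∈ I, α a ∈ I) :
    ∀ r : ℕ,
      (∀ x : g, ∀ y ∈ homLieDerivedSeries B I r, B x y ∈ homLieDerivedSeries B I r) ∧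
      (∀ y ∈ homLieDerivedSeries B I r, α y ∈ homLieDerivedSeries B I r) := by
  intro r
  have h := derivedSeries_is_ideal_general (homLeibniz_of_homJacobi hskew hjac) hmul hsurj
    ⟨hI1, hI2⟩ r
  rw [homLieDerivedSeries_eq_iterate]
  exact ⟨h.bracket_mem, h.map_mem⟩
end

section
/- Let K be a field of characteristic zero and a, b, c, d ∈ K. On the 3-dimensional K-vector space with basis x₁, x₂, x₃, define the skew-symmetric bilinear bracket by [x₁,x₂] = a x₁ + b x₃, [x₁,x₃] = c x₂, [x₂,x₃] = d x₁ + 2a x₃ (other brackets determined by skew-symmetry), and the linear map α by α(x₁) = x₁, α(x₂) = 2x₂, α(x₃) = 2x₃. Then (K³, [·,·], α) is a Hom-Lie algebra (the Hom-Jacobi identity holds for all triples), and the Jacobi cyclic sum satisfies [x₁,[x₂,x₃]] + [x₃,[x₁,x₂]] + [x₂,[x₃,x₁]] = a c x₂; in particular, the bracket satisfies the Jacobi identity if and only if a c = 0. -/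
/-!
Over a commutative ring `R`, brackets of the form `[u, v] = M (u × v)` on `R³` are skew-symmetric.
Each summand of the Hom-Jacobi sum for a twist `A` is `M` applied to the axial vector of
`A (x ⊗ (y × z)) Mᵀ`, and the cyclic sum of `x ⊗ (y × z)` is `det (x, y, z)` times the identity.
Hence the whole sum is `det (x, y, z) • M (axialVector (A Mᵀ))`. For the bracket at hand, `A Mᵀ`
is symmetric when `A = diag (1, 2, 2)`, so its axial vector vanishes, while for `A = 1` the axial
vector is `-a x₂`, which `M` sends to `a c x₂`.
-/

section CrossBracket

open Matrix

variable {R : Type*} [CommRing R]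

/-- The axial vector of a 3 × 3 matrix: the coordinates of its antisymmetrization `N - Nᵀ`, with
signs chosen so that the axial vector of `u ⊗ v` is `u × v`. -/
def axialVector : Matrix (Fin 3) (Fin 3) R →ₗ[R] Fin 3 → R where
  toFun N := ![N 1 2 - N 2 1, N 2 0 - N 0 2, N 0 1 - N 1 0]
  map_add' N P := by
    ext i
    fin_cases i <;> simp <;> ring
  map_smul' r N := by
    ext i
    fin_cases i <;> simp [mul_sub]

theorem axialVector_apply (N : Matrix (Fin 3) (Fin 3) R) :
    axialVector N = ![N 1 2 - N 2 1, N 2 0 - N 0 2, N 0 1 - N 1 0] :=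
  rfl

theorem axialVector_vecMulVec (u v : Fin 3 → R) : axialVector (vecMulVec u v) = u ⨯₃ v := by
  simp only [axialVector_apply, vecMulVec_apply, cross_apply]

theorem axialVector_eq_zero_of_isSymm {N : Matrix (Fin 3) (Fin 3) R} (hN : N.IsSymm) :
    axialVector N = 0 := by
  simp [axialVector_apply, hN.apply 1 2, hN.apply 0 2, hN.apply 0 1]

theorem mulVec_cross_mulVec (A M : Matrix (Fin 3) (Fin 3) R) (u v : Fin 3 → R) :
    (A *ᵥ u) ⨯₃ (M *ᵥ v) = axialVector (A * vecMulVec u v * Mᵀ) := by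
  rw [mul_vecMulVec, vecMulVec_mul, vecMul_transpose, axialVector_vecMulVec]

theorem vecMulVec_cross_cyclic_sum (x y z : Fin 3 → R) :
    vecMulVec x (y ⨯₃ z) + vecMulVec y (z ⨯₃ x) + vecMulVec z (x ⨯₃ y) =
      (x ⬝ᵥ y ⨯₃ z) • (1 : Matrix (Fin 3) (Fin 3) R) := by
  rw [vec3_dotProduct]
  ext i j
  fin_cases i <;> fin_cases j <;> simp [cross_apply] <;> ring

/-- The skew-symmetric bracket on `R³` obtained by composing the cross product with the linear
map of matrix `M`; the columns of `M` are `[x₂, x₃]`, `[x₃, x₁]` and `[x₁, x₂]`. -/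
def crossBracket (M : Matrix (Fin 3) (Fin 3) R) (u v : Fin 3 → R) : Fin 3 → R :=
  M *ᵥ (u ⨯₃ v)

theorem crossBracket_homJacobi_sum (M A : Matrix (Fin 3) (Fin 3) R) (x y z : Fin 3 → R) :
    crossBracket M (A *ᵥ x) (crossBracket M y z) + crossBracket M (A *ᵥ y) (crossBracket M z x) +
        crossBracket M (A *ᵥ z) (crossBracket M x y) =
      (x ⬝ᵥ y ⨯₃ z) • (M *ᵥ axialVector (A * Mᵀ)) := by
  simp only [crossBracket, mulVec_cross_mulVec, ← mulVec_add, ← map_add, ← add_mul, ← mul_add]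
  rw [vecMulVec_cross_cyclic_sum, Matrix.mul_smul, mul_one, Matrix.smul_mul, map_smul, mulVec_smul]

theorem crossBracket_jacobi_sum (M : Matrix (Fin 3) (Fin 3) R) (x y z : Fin 3 → R) :
    crossBracket M x (crossBracket M y z) + crossBracket M y (crossBracket M z x) +
        crossBracket M z (crossBracket M x y) =
      (x ⬝ᵥ y ⨯₃ z) • (M *ᵥ axialVector Mᵀ) := by
  simpa only [one_mulVec, one_mul] using crossBracket_homJacobi_sum M 1 x y z

theorem standardBasis_tripleProduct :
    (![1, 0, 0] : Fin 3 → R) ⬝ᵥ ![0, 1, 0] ⨯₃ ![0, 0, 1] = 1 := by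
  simp [cross_apply]

theorem crossBracket_jacobi_iff (M : Matrix (Fin 3) (Fin 3) R) :
    (∀ x y z : Fin 3 → R,
      crossBracket M x (crossBracket M y z) + crossBracket M y (crossBracket M z x) +
        crossBracket M z (crossBracket M x y) = 0) ↔ M *ᵥ axialVector Mᵀ = 0 := by
  simp only [crossBracket_jacobi_sum]
  refine ⟨fun h => ?_, fun h x y z => by rw [h, smul_zero]⟩
  simpa only [standardBasis_tripleProduct, one_smul] using h ![1, 0, 0] ![0, 1, 0] ![0, 0, 1]

/-- The matrix `M` for which `crossBracket M` is the bracket `[x₁, x₂] = a x₁ + b x₃`,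
`[x₁, x₃] = c x₂`, `[x₂, x₃] = d x₁ + 2 a x₃`. -/
def bracketMatrix (a b c d : R) : Matrix (Fin 3) (Fin 3) R :=
  !![d, 0, a; 0, -c, 0; 2 * a, 0, b]

theorem crossBracket_bracketMatrix (a b c d : R) (u v : Fin 3 → R) :
    crossBracket (bracketMatrix a b c d) u v =
      ![a * (u 0 * v 1 - u 1 * v 0) + d * (u 1 * v 2 - u 2 * v 1),
        c * (u 0 * v 2 - u 2 * v 0),
        b * (u 0 * v 1 - u 1 * v 0) + 2 * a * (u 1 * v 2 - u 2 * v 1)] := by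
  ext i
  fin_cases i <;> simp [crossBracket, bracketMatrix, cross_apply, mulVec] <;> ring

theorem diagonal_mulVec_one_two_two (u : Fin 3 → R) :
    diagonal ![1, 2, 2] *ᵥ u = ![u 0, 2 * u 1, 2 * u 2] := by
  ext i
  fin_cases i <;> simp [mulVec_diagonal]

theorem isSymm_diagonal_mul_bracketMatrix_transpose (a b c d : R) :
    (diagonal ![1, 2, 2] * (bracketMatrix a b c d)ᵀ).IsSymm := by
  refine IsSymm.ext fun i j => ?_
  fin_cases i <;> fin_cases j <;> simp [bracketMatrix, diagonal_mul]

theorem bracketMatrix_mulVec_axialVector_transpose (a b c d : R) :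
    bracketMatrix a b c d *ᵥ axialVector (bracketMatrix a b c d)ᵀ = (a * c) • ![0, 1, 0] := by
  have axial_eq : axialVector (bracketMatrix a b c d)ᵀ = ![0, -a, 0] := by
    simp [axialVector_apply, bracketMatrix, two_mul]
  rw [axial_eq]
  ext i
  fin_cases i <;> simp [bracketMatrix, mulVec, mul_comm]

theorem three_dim_homLie_example_general (a b c d : R) :
    let br : (Fin 3 → R) → (Fin 3 → R) → (Fin 3 → R) := fun u v =>
      ![a * (u 0 * v 1 - u 1 * v 0) + d * (u 1 * v 2 - u 2 * v 1),
        c * (u 0 * v 2 - u 2 * v 0),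
        b * (u 0 * v 1 - u 1 * v 0) + 2 * a * (u 1 * v 2 - u 2 * v 1)]
    let α : (Fin 3 → R) → (Fin 3 → R) := fun u => ![u 0, 2 * u 1, 2 * u 2]
    (∀ x y z : Fin 3 → R,
      br (α x) (br y z) + br (α y) (br z x) + br (α z) (br x y) = 0) ∧
    (br ![1, 0, 0] (br ![0, 1, 0] ![0, 0, 1]) + br ![0, 0, 1] (br ![1, 0, 0] ![0, 1, 0])
      + br ![0, 1, 0] (br ![0, 0, 1] ![1, 0, 0]) = (a * c) • ![(0 : R), 1, 0]) ∧
    ((∀ x y z : Fin 3 → R,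
        br x (br y z) + br y (br z x) + br z (br x y) = 0) ↔ a * c = 0) := by
  intro br α
  have br_eq : br = crossBracket (bracketMatrix a b c d) :=
    funext₂ fun u v => (crossBracket_bracketMatrix a b c d u v).symm
  have α_eq : α = (diagonal ![1, 2, 2] *ᵥ ·) :=
    funext fun u => (diagonal_mulVec_one_two_two u).symm
  rw [br_eq, α_eq]
  refine ⟨fun x y z => ?_, ?_, ?_⟩
  · rw [crossBracket_homJacobi_sum, axialVector_eq_zero_of_isSymm
      (isSymm_diagonal_mul_bracketMatrix_transpose a b c d), mulVec_zero, smul_zero]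
  · rw [add_right_comm, crossBracket_jacobi_sum, standardBasis_tripleProduct, one_smul,
      bracketMatrix_mulVec_axialVector_transpose]
  · rw [crossBracket_jacobi_iff, bracketMatrix_mulVec_axialVector_transpose]
    simp

end CrossBracket

/-- Example of a 3-dimensional Hom-Lie algebra which fails the Jacobi identity
exactly when `a*c ≠ 0`. -/
theorem three_dim_homLie_example {K : Type*} [Field K] [CharZero K] (a b c d : K) :
    let br : (Fin 3 → K) → (Fin 3 → K) → (Fin 3 → K) := fun u v =>
      ![a * (u 0 * v 1 - u 1 * v 0) + d * (u 1 * v 2 - u 2 * v 1),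
        c * (u 0 * v 2 - u 2 * v 0),
        b * (u 0 * v 1 - u 1 * v 0) + 2 * a * (u 1 * v 2 - u 2 * v 1)]
    let α : (Fin 3 → K) → (Fin 3 → K) := fun u => ![u 0, 2 * u 1, 2 * u 2]
    (∀ x y z : Fin 3 → K,
      br (α x) (br y z) + br (α y) (br z x) + br (α z) (br x y) = 0) ∧
    (br ![1,0,0] (br ![0,1,0] ![0,0,1]) + br ![0,0,1] (br ![1,0,0] ![0,1,0])
      + br ![0,1,0] (br ![0,0,1] ![1,0,0]) = (a * c) • ![(0:K),1,0]) ∧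
    ((∀ x y z : Fin 3 → K,
        br x (br y z) + br y (br z x) + br z (br x y) = 0) ↔ a * c = 0) :=
  three_dim_homLie_example_general a b c d
end
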